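/- Let A_1, A_2 ∈ {0,1}^{n_1} be activation patterns with r_i = Σ_j (A_i)_j and s = Σ_j (A_1)_j (A_2)_j, and assume r_1 + r_2 − s = n_1, n_0 ≥ n_1 and n_1 ≤ n_2. Let J ⊆ ℂ[z^{(1)}_{ab}, z^{(2)}_{ab} : a ∈ [n_2], b ∈ [n_0]] be the vanishing ideal of the image of θ ↦ (W^(2)·diag(A_1)·W^(1), W^(2)·diag(A_2)·W^(1)). Then the Krull dimension of the quotient ring ℂ[z^{(1)}, z^{(2)}]/J equals d_a + d_b + d_c, where d_a = (r_1−s)(n_0+n_2) − (r_1−s)², d_b = (r_2−s)(n_0+n_2) − (r_2−s)², and d_c = s(n_0+n_2) − s². -/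

import Mathlib

/-!
Write `U = W₂`, `V = W₁`. The hidden neurons `j` split into blocks according to the value
`(A₁ j, A₂ j)`; the hypothesis `r₁ + r₂ - s = n₁` says that no neuron has value `(0, 0)`, so there
are three blocks, of sizes `a = r₁ - s`, `b = r₂ - s`, `c = s`. The pair of masked products is
unchanged under `(U, V) ↦ (U G⁻¹, G V)` for `G` invertible and block diagonal. Such a `G` can
generically be chosen so that the diagonal blocks of the top `n₁ × n₁` submatrix of `U` become
identity matrices. Freezing these `a² + b² + c²` entries of `U` leaves
`n₁ n₀ + n₂ n₁ - (a² + b² + c²) = d_a + d_b + d_c` free parameters (`card_Par`).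

* The vanishing ideal of the image is the kernel of the polynomial parametrization by the free
  parameters (`mem_ker_iff`). Normalization works when a determinant does not vanish
  (`exists_normalized`); the general case follows by continuity, moving `U` along a line on which
  this determinant is a characteristic polynomial.
* The Krull dimension of the coordinate ring of the image of a polynomial map `p` equals the number
  of parameters as soon as every derivation of the function field of the parameter space which
  kills all components of `p` is zero (`ringKrullDim_quotient_ker_of_derivation`). By vanishing of
  Kähler differentials, the parameters are then algebraic over the components of `p`, so the
  transcendence degrees agree, and Noether normalization turns this into Krull dimension.
* For the normalized parametrization such a derivation `D` is zero (`derivation_eq_zero`). With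
  `M_t` the mask of block `t`, put `E_t = D(U M_t V) = D(U) M_t V + U M_t D(V)`. The hypothesis
  gives `E_a + E_c = 0 = E_b + E_c`. The generic `U`, `V` have one-sided inverses `P`, `Q`, and
  `E_t` is killed by sandwiching it between the complements of the projections `U M_t P` and
  `Q M_t V`. Thus `E_c` is killed for all three blocks, and as the projections of distinct blocks
  are orthogonal, `E_c = 0` (`eq_zero_of_projections`), whence all `E_t` vanish. Reading off the
  rows in which `U M_t` is frozen gives `D(V) = 0`, and cancelling `V` gives `D(U) = 0`.
-/

noncomputable section

/-- The diagonal 0/1 mask matrix of an activation pattern of the hidden layer. -/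
def diagPat (n₁ : ℕ) (A : Fin n₁ → Bool) : Matrix (Fin n₁) (Fin n₁) ℝ :=
  Matrix.diagonal (fun j => if A j then (1 : ℝ) else 0)

/-- The number of active neurons `r = Σ_j A_j` of a pattern. -/
def rOf {n₁ : ℕ} (A : Fin n₁ → Bool) : ℕ :=
  (Finset.univ.filter fun j => A j = true).card

/-- The number of commonly active neurons `s = Σ_j (A_1)_j (A_2)_j`. -/
def sOf {n₁ : ℕ} (A₁ A₂ : Fin n₁ → Bool) : ℕ :=
  (Finset.univ.filter fun j => A₁ j = true ∧ A₂ j = true).card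

/-- `r·w − r²`. -/
def dExp (w r : ℕ) : ℕ := r * w - r ^ 2

/-- The vanishing ideal, inside `ℂ[y_i : i ∈ σ]`, of a set of real points. -/
def vanishingIdeal {σ : Type*} (S : Set (σ → ℝ)) : Ideal (MvPolynomial σ ℂ) where
  carrier := {f | ∀ y ∈ S, MvPolynomial.eval (fun i => (y i : ℂ)) f = 0}
  add_mem' := by
    intro a b ha hb y hy
    simp [map_add, ha y hy, hb y hy]
  zero_mem' := by intro y hy; simp
  smul_mem' := by
    intro c f hf y hy
    simp [smul_eq_mul, map_mul, hf y hy]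

/-! ### Krull dimension of the coordinate ring of a parametrized variety -/

theorem ringKrullDim_eq_of_integral {R S : Type*} [CommRing R] [CommRing S] [Algebra R S]
    [Algebra.IsIntegral R S] (hinj : Function.Injective (algebraMap R S)) :
    ringKrullDim R = ringKrullDim S := by
  refine le_antisymm ?_ ?_
  · refine iSup_le fun l => ?_
    obtain ⟨P, -, hP, hPl⟩ := Ideal.exists_ideal_over_prime_of_isIntegral (S := S)
      (RelSeries.head l).asIdeal ⊥ (by
        rw [← RingHom.ker_eq_comap_bot, (RingHom.injective_iff_ker_eq_bot _).1 hinj]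
        exact bot_le)
    have : P.LiesOver (RelSeries.head l).asIdeal := ⟨hPl.symm⟩
    obtain ⟨L, hL, -⟩ := Ideal.exists_ltSeries_of_hasGoingUp (S := S) l P
    rw [← hL]
    exact Order.LTSeries.length_le_krullDim L
  · exact Order.krullDim_le_of_strictMono (PrimeSpectrum.comap (algebraMap R S))
      fun I J hIJ => Ideal.IsIntegral.comap_lt_comap (R := R) (A := S) hIJ

/-- By Noether normalization: a finitely generated domain is integral over a polynomial ring in
as many variables as its transcendence degree. -/
theorem ringKrullDim_eq_of_trdeg {k A : Type*} [Field k] [CommRing A] [IsDomain A] [Algebra k A]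
    [Algebra.FiniteType k A] (d : ℕ) (hd : Algebra.trdeg k A = d) : ringKrullDim A = d := by
  obtain ⟨s, g, hg, hint⟩ := exists_integral_inj_algHom_of_fg k A
  let : Algebra (MvPolynomial (Fin s) k) A := g.toRingHom.toAlgebra
  have : IsScalarTower k (MvPolynomial (Fin s) k) A := IsScalarTower.of_algHom g
  have : Algebra.IsIntegral (MvPolynomial (Fin s) k) A := ⟨hint⟩
  have : FaithfulSMul (MvPolynomial (Fin s) k) A :=
    (faithfulSMul_iff_algebraMap_injective _ _).2 hg
  have h1 : ringKrullDim (MvPolynomial (Fin s) k) = ringKrullDim A :=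
    ringKrullDim_eq_of_integral hg
  have h2 := lift_trdeg_add_eq k (MvPolynomial (Fin s) k) A
  rw [trdeg_eq_zero (R := MvPolynomial (Fin s) k) (A := A), hd] at h2
  have h3 : s = d := by
    simpa using h2
  rw [← h1, MvPolynomial.ringKrullDim_of_isNoetherianRing, ringKrullDim_eq_zero_of_field]
  simp [h3]

open scoped IntermediateField.algebraAdjoinAdjoin in
/-- Jacobian criterion for algebraic dependence in characteristic zero: if a derivation of `L` that
vanishes on `S` is zero, then `Ω[L⁄k(S)] = 0`, so `L` is separable algebraic over `k(S)`. -/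
theorem isAlgebraic_adjoin_of_derivation {k L : Type*} [Field k] [Field L] [CharZero k]
    [Algebra k L] [Algebra.EssFiniteType k L] (S : Set L)
    (H : ∀ D : Derivation k L L, (∀ s ∈ S, D s = 0) → ∀ x, D x = 0) :
    Algebra.IsAlgebraic (Algebra.adjoin k S) L := by
  let K := IntermediateField.adjoin k S
  have : Algebra.EssFiniteType K L := .of_comp k K L
  have : Algebra.FormallyUnramified K L := by
    refine ⟨(subsingleton_iff_forall_eq 0).2 fun w => ?_⟩
    suffices (⊤ : Submodule L (Ω[L⁄K])) ≤ ⊥ from this trivial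
    rw [← KaehlerDifferential.span_range_derivation, Submodule.span_le]
    rintro _ ⟨x, rfl⟩
    change KaehlerDifferential.D K L x = 0
    rw [← Module.forall_dual_apply_eq_zero_iff L]
    intro f
    refine H ((f.compDer (KaehlerDifferential.D K L)).restrictScalars k) (fun s hs => ?_) x
    have h : s = algebraMap K L ⟨s, IntermediateField.subset_adjoin _ _ hs⟩ := rfl
    change f (KaehlerDifferential.D K L s) = 0
    rw [h, Derivation.map_algebraMap, map_zero]
  have hsep : Algebra.IsSeparable K L := Algebra.FormallyUnramified.isSeparable K L
  exact (IsFractionRing.comap_isAlgebraic_iff (K := K)).2 inferInstance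

/-- A finitely generated subalgebra over which the fraction field of `B` is algebraic has
dimension `trdeg k B`, by additivity of the transcendence degree. -/
theorem ringKrullDim_adjoin_of_isAlgebraic {k B L : Type*} [Field k] [CommRing B] [IsDomain B]
    [Field L] [Algebra k B] [Algebra B L] [Algebra k L] [IsScalarTower k B L] [IsFractionRing B L]
    (S : Finset L) (d : ℕ) (hd : Algebra.trdeg k B = d)
    (halg : Algebra.IsAlgebraic (Algebra.adjoin k (S : Set L)) L) :
    ringKrullDim (Algebra.adjoin k (S : Set L)) = d := by
  have : Algebra.FiniteType k (Algebra.adjoin k (S : Set L)) := by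
    rw [← Subalgebra.fg_iff_finiteType]
    exact ⟨S, rfl⟩
  have : FaithfulSMul k (Algebra.adjoin k (S : Set L)) :=
    (faithfulSMul_iff_algebraMap_injective _ _).2 (algebraMap k _).injective
  have : FaithfulSMul k B :=
    (faithfulSMul_iff_algebraMap_injective _ _).2 (algebraMap k _).injective
  have : FaithfulSMul B L :=
    (faithfulSMul_iff_algebraMap_injective _ _).2 (IsFractionRing.injective B L)
  have : Algebra.IsAlgebraic B L := IsLocalization.isAlgebraic (R := B) L (nonZeroDivisors B)
  have h1 := lift_trdeg_add_eq k (Algebra.adjoin k (S : Set L)) L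
  have h2 := lift_trdeg_add_eq k B L
  rw [trdeg_eq_zero (A := L)] at h1 h2
  apply ringKrullDim_eq_of_trdeg (k := k)
  rw [hd] at h2
  simp only [Cardinal.lift_zero, add_zero, Cardinal.lift_natCast, Cardinal.lift_id] at h1 h2
  rw [h1]
  exact (Cardinal.lift_eq_nat_iff.1 h2.symm)

/-- The closure of the image of the polynomial map `p` has dimension the number of parameters if
every derivation of the function field `L` killing the components of `p` kills the coordinates. -/
theorem ringKrullDim_quotient_ker_of_derivation {σ τ : Type} [Fintype σ] [Fintype τ]
    {L : Type} [Field L] [Algebra (MvPolynomial σ ℂ) L] [Algebra ℂ L]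
    [IsScalarTower ℂ (MvPolynomial σ ℂ) L] [IsFractionRing (MvPolynomial σ ℂ) L]
    (p : τ → MvPolynomial σ ℂ)
    (H : ∀ D : Derivation ℂ L L, (∀ t, D (algebraMap (MvPolynomial σ ℂ) _ (p t)) = 0) →
        ∀ i, D (algebraMap (MvPolynomial σ ℂ) _ (MvPolynomial.X i)) = 0) :
    ringKrullDim (MvPolynomial τ ℂ ⧸ RingHom.ker (MvPolynomial.aeval (R := ℂ) p)) =
      (Fintype.card σ : ℕ) := by
  classical
  let ι : MvPolynomial σ ℂ →ₐ[ℂ] L := IsScalarTower.toAlgHom ℂ _ L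
  have hι : Function.Injective ι := IsFractionRing.injective _ L
  let φ : MvPolynomial τ ℂ →ₐ[ℂ] L := MvPolynomial.aeval fun t => ι (p t)
  have hφ : φ = ι.comp (MvPolynomial.aeval p) := by
    ext t; simp [φ]
  have hker : RingHom.ker (MvPolynomial.aeval (R := ℂ) p) =
      RingHom.ker φ.rangeRestrict.toRingHom := by
    ext f
    rw [RingHom.mem_ker, RingHom.mem_ker, ← map_eq_zero_iff ι hι, ← AlgHom.comp_apply, ← hφ]
    exact (Subtype.ext_iff (a1 := φ.rangeRestrict f) (a2 := 0)).symm
  let S : Finset L := Finset.univ.image fun t => ι (p t)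
  have hA : φ.range = Algebra.adjoin ℂ (S : Set L) := by
    rw [← Algebra.map_top, ← MvPolynomial.adjoin_range_X, AlgHom.map_adjoin, ← Set.range_comp,
      Finset.coe_image, Finset.coe_univ, Set.image_univ]
    congr 2
    ext t; simp [φ]
  have hess : Algebra.EssFiniteType ℂ L := by
    have : Algebra.EssFiniteType (MvPolynomial σ ℂ) L := .of_isLocalization _ (nonZeroDivisors _)
    exact .comp ℂ (MvPolynomial σ ℂ) L
  have halg : Algebra.IsAlgebraic (Algebra.adjoin ℂ (S : Set L)) L := by
    refine isAlgebraic_adjoin_of_derivation _ fun D hD x => ?_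
    have hX := H D fun t => hD _ (by simp [S, ι])
    have hB : ∀ b : MvPolynomial σ ℂ, D (algebraMap _ _ b) = 0 := by
      intro b
      induction b using MvPolynomial.induction_on with
      | C a =>
        rw [← MvPolynomial.algebraMap_eq, ← IsScalarTower.algebraMap_apply]
        exact D.map_algebraMap a
      | add a b ha hb => rw [map_add, map_add, ha, hb, add_zero]
      | mul_X a i ha => rw [map_mul, D.leibniz, ha, hX]; simp
    obtain ⟨a, b, hb, rfl⟩ := IsFractionRing.div_surjective (A := MvPolynomial σ ℂ) x
    rw [D.leibniz_div, hB, hB]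
    simp
  rw [hker, ← ringKrullDim_adjoin_of_isAlgebraic (B := MvPolynomial σ ℂ) S (Fintype.card σ)
    (by simp) halg, ← hA]
  exact ringKrullDim_eq_of_ringEquiv
    (RingHom.quotientKerEquivOfSurjective φ.rangeRestrict_surjective)

/-! ### Derivations killing the masked products -/

/-- The diagonal 0/1 matrix of an activation pattern, over an arbitrary ring; over `ℝ` it is
`diagPat` definitionally. -/
def maskMat (R : Type*) [CommRing R] {ι : Type*} [DecidableEq ι] (s : ι → Bool) : Matrix ι ι R :=
  Matrix.diagonal fun j => if s j then 1 else 0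

theorem maskMat_mul {R : Type*} [CommRing R] {ι : Type*} [DecidableEq ι] [Fintype ι]
    (s t : ι → Bool) : maskMat R s * maskMat R t = maskMat R fun j => s j && t j := by
  rw [maskMat, maskMat, maskMat, Matrix.diagonal_mul_diagonal]
  congr 1
  ext j
  cases s j <;> cases t j <;> simp

/-- If `E` is killed by the sandwich `(1 - P) * E * (1 - Q)` for three pairs `(P, Q)`, then
`E = 0` when the projections are mutually orthogonal: from the pairs `b`, `c` one gets
`Pa * E = Pa * E * Qb = Pa * E * Qc`, hence `Pa * E = Pa * E * Qc * Qb = 0`, likewise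
`E * Qa = 0`, and the pair `a` then reads `E = 0`. -/
theorem eq_zero_of_projections {R : Type*} [CommRing R] {m l : Type*} [Fintype m] [Fintype l]
    [DecidableEq m] [DecidableEq l] (E : Matrix m l R) (Pa Pb Pc : Matrix m m R)
    (Qa Qb Qc : Matrix l l R) (hab : Pa * Pb = 0) (hac : Pa * Pc = 0) (hbc : Pb * Pc = 0)
    (hba' : Qb * Qa = 0) (hca' : Qc * Qa = 0) (hcb' : Qc * Qb = 0)
    (ha : (1 - Pa) * E * (1 - Qa) = 0) (hb : (1 - Pb) * E * (1 - Qb) = 0)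
    (hc : (1 - Pc) * E * (1 - Qc) = 0) : E = 0 := by
  have h1 : ∀ P' : Matrix m m R, ∀ Q' : Matrix l l R, Pa * P' = 0 →
      (1 - P') * E * (1 - Q') = 0 → Pa * E = Pa * E * Q' := by
    intro P' Q' hP h
    have : Pa * ((1 - P') * E * (1 - Q')) = (Pa - Pa * P') * E * (1 - Q') := by
      simp only [Matrix.mul_sub, Matrix.sub_mul, Matrix.mul_assoc, Matrix.one_mul,
        Matrix.mul_one]
    rw [h, hP] at this
    simp only [sub_zero, Matrix.mul_zero, Matrix.mul_sub, Matrix.mul_one] at this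
    exact sub_eq_zero.1 this.symm
  have h2 : ∀ P' : Matrix m m R, ∀ Q' : Matrix l l R, Q' * Qa = 0 →
      (1 - P') * E * (1 - Q') = 0 → E * Qa = P' * (E * Qa) := by
    intro P' Q' hQ h
    have : ((1 - P') * E * (1 - Q')) * Qa = (1 - P') * E * (Qa - Q' * Qa) := by
      simp only [Matrix.mul_sub, Matrix.sub_mul, Matrix.mul_assoc, Matrix.one_mul]
    rw [h, hQ] at this
    simp only [sub_zero, Matrix.zero_mul, Matrix.sub_mul, Matrix.one_mul, Matrix.mul_assoc] at this
    exact sub_eq_zero.1 this.symm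
  have hL : Pa * E = 0 := by
    rw [h1 _ _ hab hb, h1 _ _ hac hc, Matrix.mul_assoc, hcb', Matrix.mul_zero]
  have hR : E * Qa = 0 := by
    rw [h2 _ _ hba' hb, h2 _ _ hca' hc, ← Matrix.mul_assoc, hbc, Matrix.zero_mul]
  simpa [Matrix.mul_sub, Matrix.sub_mul, hL, hR, Matrix.mul_assoc] using ha

theorem map_derivation_mul {k L : Type*} [CommRing k] [CommRing L] [Algebra k L]
    (D : Derivation k L L) {m n l : Type*} [Fintype n] (A : Matrix m n L) (B : Matrix n l L) :
    (A * B).map D = A.map D * B + A * B.map D := by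
  ext i j
  simp only [Matrix.map_apply, Matrix.mul_apply, Matrix.add_apply, map_sum, D.leibniz,
    smul_eq_mul, ← Finset.sum_add_distrib]
  exact Finset.sum_congr rfl fun _ _ => by ring

theorem map_derivation_maskMat {k L : Type*} [CommRing k] [CommRing L] [Algebra k L]
    (D : Derivation k L L) {ι : Type*} [DecidableEq ι] (s : ι → Bool) :
    (maskMat L s).map D = 0 := by
  ext i j
  by_cases h : i = j <;> by_cases h' : s i <;> simp_all [maskMat, Matrix.diagonal]

/-- The indicator of the block of neurons `j` with `(A₁ j, A₂ j) = t`. -/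
def blk {n : ℕ} (A₁ A₂ : Fin n → Bool) (t : Bool × Bool) (j : Fin n) : Bool :=
  decide ((A₁ j, A₂ j) = t)

/-- The infinitesimal injectivity of the normalized parametrization: a derivation that kills both
masked products kills `U` and `V`, provided `U` and `V` have one-sided inverses and the rows
`e i` of `U` are those of the identity within each block. -/
theorem derivation_eq_zero {k L : Type*} [CommRing k] [CommRing L] [Algebra k L]
    (D : Derivation k L L) {n : ℕ} {m l : Type*} [Fintype m] [Fintype l] [DecidableEq m]
    [DecidableEq l]
    (A₁ A₂ : Fin n → Bool) (hA : ∀ j, A₁ j = true ∨ A₂ j = true) (e : Fin n → m)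
    (U : Matrix m (Fin n) L) (V : Matrix (Fin n) l L) (P : Matrix (Fin n) m L)
    (Q : Matrix l (Fin n) L) (hP : P * U = 1) (hQ : V * Q = 1)
    (hU : ∀ i j, (A₁ i, A₂ i) = (A₁ j, A₂ j) → U (e i) j = if i = j then 1 else 0)
    (h1 : (U * maskMat L A₁ * V).map D = 0) (h2 : (U * maskMat L A₂ * V).map D = 0) :
    U.map D = 0 ∧ V.map D = 0 := by
  let M : Bool × Bool → Matrix (Fin n) (Fin n) L := fun t => maskMat L (blk A₁ A₂ t)
  have hM1 : maskMat L A₁ = M (true, false) + M (true, true) := by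
    rw [maskMat]
    simp only [M, maskMat, Matrix.diagonal_add, blk]
    congr 1; ext j
    rcases Bool.eq_false_or_eq_true (A₁ j) with h | h <;>
      rcases Bool.eq_false_or_eq_true (A₂ j) with h' | h' <;> simp [h, h']
  have hM2 : maskMat L A₂ = M (false, true) + M (true, true) := by
    rw [maskMat]
    simp only [M, maskMat, Matrix.diagonal_add, blk]
    congr 1; ext j
    rcases Bool.eq_false_or_eq_true (A₁ j) with h | h <;>
      rcases Bool.eq_false_or_eq_true (A₂ j) with h' | h' <;> simp [h, h']
  have hMM : ∀ s t, s ≠ t → M s * M t = 0 := by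
    intro s t hst
    simp only [M, maskMat_mul]
    ext i j
    simp only [maskMat, Matrix.diagonal_apply, blk, Matrix.zero_apply]
    split_ifs with h h' <;> simp_all
  have hMM' : ∀ t, M t * M t = M t := by
    intro t
    simp only [M, maskMat_mul, Bool.and_self]
  let E : Bool × Bool → Matrix m l L := fun t => U.map D * M t * V + U * M t * V.map D
  have hE : ∀ t, (U * M t * V).map D = E t := by
    intro t
    simp only [map_derivation_mul, M, map_derivation_maskMat, E, Matrix.mul_zero, add_zero]
  let Pr : Bool × Bool → Matrix m m L := fun t => U * M t * P
  let Pr' : Bool × Bool → Matrix l l L := fun t => Q * M t * V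
  have hPrU : ∀ s t, Pr s * (U * M t) = U * (M s * M t) := by
    intro s t
    simp only [Pr, Matrix.mul_assoc]
    rw [← Matrix.mul_assoc P, hP, Matrix.one_mul]
  have hVPr : ∀ s t, (M s * V) * Pr' t = (M s * M t) * V := by
    intro s t
    simp only [Pr', Matrix.mul_assoc]
    rw [← Matrix.mul_assoc V, hQ, Matrix.one_mul]
  have hPr : ∀ s t, s ≠ t → Pr s * Pr t = 0 := by
    intro s t hst
    change Pr s * (U * M t * P) = 0
    rw [← Matrix.mul_assoc, hPrU, hMM _ _ hst]; simp
  have hPr' : ∀ s t, s ≠ t → Pr' s * Pr' t = 0 := by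
    intro s t hst
    change Q * M s * V * Pr' t = 0
    rw [Matrix.mul_assoc Q, Matrix.mul_assoc, hVPr, hMM _ _ hst]; simp
  have hEPr : ∀ t, (1 - Pr t) * E t * (1 - Pr' t) = 0 := by
    intro t
    have a1 : (1 - Pr t) * (U * M t) = 0 := by
      rw [Matrix.sub_mul, hPrU, hMM', Matrix.one_mul, sub_self]
    have a2 : (M t * V) * (1 - Pr' t) = 0 := by
      rw [Matrix.mul_sub, hVPr, hMM', Matrix.mul_one, sub_self]
    have a3 : E t = U.map D * (M t * V) + U * M t * V.map D := by
      rw [← Matrix.mul_assoc]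
    rw [a3, Matrix.mul_add, Matrix.add_mul, ← Matrix.mul_assoc _ (U * M t), a1, Matrix.mul_assoc,
      Matrix.mul_assoc, a2, Matrix.mul_zero, Matrix.mul_zero, Matrix.zero_mul, Matrix.zero_mul,
      add_zero]
  have h1' : E (true, false) + E (true, true) = 0 := by
    rw [← hE, ← hE, ← h1, hM1, Matrix.mul_add, Matrix.add_mul]
    ext i j; simp
  have h2' : E (false, true) + E (true, true) = 0 := by
    rw [← hE, ← hE, ← h2, hM2, Matrix.mul_add, Matrix.add_mul]
    ext i j; simp
  -- `E (true, true)` is minus each of the other two, so it is killed by all three sandwiches.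
  have hc : E (true, true) = 0 := by
    have ha := hEPr (true, false)
    have hb := hEPr (false, true)
    rw [eq_neg_of_add_eq_zero_left h1'] at ha
    rw [eq_neg_of_add_eq_zero_left h2'] at hb
    refine eq_zero_of_projections _ _ _ _ _ _ _ (hPr (true, false) (false, true) (by decide))
      (hPr (true, false) (true, true) (by decide)) (hPr (false, true) (true, true) (by decide))
      (hPr' (false, true) (true, false) (by decide)) (hPr' (true, true) (true, false) (by decide))
      (hPr' (true, true) (false, true) (by decide)) ?_ ?_ (hEPr _)
    · simpa using ha
    · simpa using hb
  have hE0 : ∀ j, E (A₁ j, A₂ j) = 0 := by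
    intro j
    rw [hc, add_zero] at h1' h2'
    have hj := hA j
    obtain ⟨s, hs⟩ : ∃ s, s = (A₁ j, A₂ j) := ⟨_, rfl⟩
    rw [← hs]
    match s, hs with
    | (true, true), _ => exact hc
    | (true, false), _ => exact h1'
    | (false, true), _ => exact h2'
    | (false, false), hs =>
      rw [Prod.mk.injEq] at hs
      rw [← hs.1, ← hs.2] at hj
      simp at hj
  -- Row `e i` of `U * M t`, for `t` the block of `i`, is the constant unit row `i`, so row `e i` of
  -- `E t` is row `i` of `D V`.
  have hV : V.map D = 0 := by
    ext i j
    have h := congrFun (congrFun (hE0 i) (e i)) j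
    rw [Matrix.zero_apply] at h
    simp only [E] at h
    rw [Matrix.add_apply, Matrix.mul_apply, Matrix.mul_apply] at h
    simp only [M, maskMat, Matrix.mul_diagonal, blk, Matrix.map_apply] at h
    rw [Finset.sum_eq_zero, Finset.sum_eq_single i] at h
    · simpa [hU i i rfl] using h
    · intro b _ hb
      by_cases hbi : (A₁ b, A₂ b) = (A₁ i, A₂ i)
      · rw [hU i b hbi.symm, if_neg (Ne.symm hb)]; simp
      · simp [hbi]
    · simp
    · intro b _
      by_cases hbi : (A₁ b, A₂ b) = (A₁ i, A₂ i)
      · rw [hU i b hbi.symm]; split_ifs <;> simp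
      · simp [hbi]
  refine ⟨?_, hV⟩
  ext i j
  have h : U.map D * M (A₁ j, A₂ j) * V * Q = 0 := by
    have := hE0 j
    simp only [E, hV, Matrix.mul_zero, add_zero] at this
    rw [this, Matrix.zero_mul]
  rw [Matrix.mul_assoc, hQ, Matrix.mul_one] at h
  have := congrFun (congrFun h i) j
  simpa [M, maskMat, blk] using this

/-! ### The normalized parametrization -/

/-- The position `p = (i, j)` of `U` is frozen when `i = e k` with `k` and `j` in the same block.
Here `e` selects the rows of `U` used for the normalization. -/
def Frozen {n : ℕ} {m : Type} (A₁ A₂ : Fin n → Bool) (e : Fin n → m) (p : m × Fin n) : Prop :=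
  ∃ k, p.1 = e k ∧ (A₁ k, A₂ k) = (A₁ p.2, A₂ p.2)

/-- The free parameters: all entries of `V`, and the entries of `U` that are not frozen. -/
abbrev Par {n : ℕ} {m : Type} (l : Type) (A₁ A₂ : Fin n → Bool) (e : Fin n → m) : Type :=
  (Fin n × l) ⊕ {p : m × Fin n // ¬ Frozen A₁ A₂ e p}

open Classical in
/-- The normalized matrix `U` with free entries `x`; its frozen entries are those of an identity
matrix in the rows selected by `e`. -/
noncomputable def normU {n : ℕ} {m l : Type} {A₁ A₂ : Fin n → Bool} {e : Fin n → m}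
    {R : Type*} [CommRing R] (x : Par l A₁ A₂ e → R) : Matrix m (Fin n) R := fun i j =>
  if h : Frozen A₁ A₂ e (i, j) then if i = e j then 1 else 0 else x (Sum.inr ⟨(i, j), h⟩)

/-- The matrix `V` with entries `x`. -/
def normV {n : ℕ} {m l : Type} {A₁ A₂ : Fin n → Bool} {e : Fin n → m} {R : Type*}
    (x : Par l A₁ A₂ e → R) : Matrix (Fin n) l R := fun i j => x (Sum.inl (i, j))

/-- The pair of masked products, as a family of coordinates. -/
noncomputable def outp {n : ℕ} {m l : Type} (A₁ A₂ : Fin n → Bool) {R : Type*} [CommRing R]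
    (U : Matrix m (Fin n) R) (V : Matrix (Fin n) l R) (q : Fin 2 × m × l) : R :=
  ![U * maskMat R A₁ * V, U * maskMat R A₂ * V] q.1 q.2.1 q.2.2

theorem map_maskMat {R S : Type*} [CommRing R] [CommRing S] (f : R →+* S) {ι : Type*}
    [DecidableEq ι] (s : ι → Bool) : (maskMat R s).map f = maskMat S s := by
  ext i j
  by_cases h : i = j <;> by_cases h' : s i <;> simp_all [maskMat, Matrix.diagonal]

theorem map_outp {n : ℕ} {m l : Type} (A₁ A₂ : Fin n → Bool) {R S : Type*} [CommRing R]
    [CommRing S] (f : R →+* S) (U : Matrix m (Fin n) R) (V : Matrix (Fin n) l R)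
    (q : Fin 2 × m × l) : f (outp A₁ A₂ U V q) = outp A₁ A₂ (U.map f) (V.map f) q := by
  obtain ⟨a, i, j⟩ := q
  have key : ∀ s : Fin n → Bool, f ((U * maskMat R s * V) i j) =
      (U.map f * maskMat S s * V.map f) i j := by
    intro s
    rw [← map_maskMat f s, ← Matrix.map_mul, ← Matrix.map_mul, Matrix.map_apply]
  fin_cases a
  · exact key A₁
  · exact key A₂

theorem map_normU {n : ℕ} {m l : Type} {A₁ A₂ : Fin n → Bool} {e : Fin n → m} {R S : Type*}
    [CommRing R] [CommRing S] (f : R →+* S) (x : Par l A₁ A₂ e → R) :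
    (normU x).map f = normU (fun i => f (x i)) := by
  ext i j
  rw [Matrix.map_apply, normU, normU]
  split_ifs <;> simp

theorem normU_apply_frozen {n : ℕ} {m l : Type} {A₁ A₂ : Fin n → Bool} {e : Fin n → m}
    (he : Function.Injective e) {R : Type*}
    [CommRing R] (x : Par l A₁ A₂ e → R) {i j : Fin n} (h : (A₁ i, A₂ i) = (A₁ j, A₂ j)) :
    normU x (e i) j = if i = j then 1 else 0 := by
  rw [normU, dif_pos ⟨i, rfl, h⟩]
  simp [he.eq_iff]

theorem normU_inr {n : ℕ} {m l : Type} {A₁ A₂ : Fin n → Bool} {e : Fin n → m}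
    {R : Type*} [CommRing R] (x : Par l A₁ A₂ e → R) (p : {p : m × Fin n // ¬ Frozen A₁ A₂ e p}) :
    normU x p.1.1 p.1.2 = x (Sum.inr p) := by
  rw [normU, dif_neg p.2]

/-- A parameter point at which the selected square submatrices of `U` and `V` are both the
identity. -/
noncomputable def basePt {n : ℕ} {m l : Type} [DecidableEq l] (A₁ A₂ : Fin n → Bool) (e : Fin n → m)
    (e₀ : Fin n → l) : Par l A₁ A₂ e → ℂ :=
  Sum.elim (fun p => if e₀ p.1 = p.2 then 1 else 0) fun _ => 0

open MvPolynomial in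
/-- The derivation criterion holds for the generic normalized matrices. Their one-sided inverses
exist over the fraction field since the selected square submatrices specialize to the identity at
`basePt`, so have nonzero determinant. -/
theorem genericPar_derivation_eq_zero {n : ℕ} {m l : Type} [Fintype m] [Fintype l]
    [DecidableEq m] [DecidableEq l] (A₁ A₂ : Fin n → Bool) (hA : ∀ j, A₁ j = true ∨ A₂ j = true)
    (e : Fin n → m) (he : Function.Injective e) (e₀ : Fin n → l) (he₀ : Function.Injective e₀)
    {L : Type} [Field L] [Algebra (MvPolynomial (Par l A₁ A₂ e) ℂ) L] [Algebra ℂ L]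
    [IsScalarTower ℂ (MvPolynomial (Par l A₁ A₂ e) ℂ) L]
    [IsFractionRing (MvPolynomial (Par l A₁ A₂ e) ℂ) L]
    (D : Derivation ℂ L L)
    (hD : ∀ q, D (algebraMap _ _ (outp A₁ A₂ (normU (X (R := ℂ) (σ := Par l A₁ A₂ e)))
      (normV X) q)) = 0) (i : Par l A₁ A₂ e) :
    D (algebraMap (MvPolynomial (Par l A₁ A₂ e) ℂ) L (X i)) = 0 := by
  set B := MvPolynomial (Par l A₁ A₂ e) ℂ
  let f : B →+* L := algebraMap B L
  let x : Par l A₁ A₂ e → B := X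
  let ev : B →+* ℂ := MvPolynomial.eval (basePt A₁ A₂ e e₀)
  have hinj : Function.Injective f := IsFractionRing.injective B L
  have evx : ∀ i, ev (x i) = basePt A₁ A₂ e e₀ i := fun i => MvPolynomial.eval_X i
  -- A matrix of polynomials that specializes to the identity is generically invertible.
  have unit_of : ∀ F : Matrix (Fin n) (Fin n) B, F.map ev = 1 → IsUnit (F.map f).det := by
    intro F hF
    rw [isUnit_iff_ne_zero]
    intro h0
    have h1 : f F.det = 0 := by rw [RingHom.map_det]; exact h0
    have h2 : F.det = 0 := hinj (by rw [h1, map_zero])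
    have h3 : ev F.det = 1 := by
      rw [RingHom.map_det]
      change (F.map ev).det = 1
      rw [hF, Matrix.det_one]
    rw [h2, map_zero] at h3
    exact zero_ne_one h3
  have hF := unit_of ((normU x).submatrix e id) (by
    ext i j
    rw [Matrix.map_apply, Matrix.submatrix_apply, id, ← Matrix.map_apply (f := ev), map_normU]
    by_cases h : (A₁ i, A₂ i) = (A₁ j, A₂ j)
    · rw [normU_apply_frozen he _ h, Matrix.one_apply]
    · rw [normU, dif_neg, evx]
      · rw [Matrix.one_apply, if_neg (by rintro rfl; exact h rfl)]; rfl
      · rintro ⟨k, hk, hk'⟩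
        obtain rfl := he hk
        exact h hk')
  have hG := unit_of ((normV x).submatrix id e₀) (by
    ext i j
    rw [Matrix.map_apply, Matrix.submatrix_apply, normV, evx, Matrix.one_apply]
    simp [basePt, he₀.eq_iff])
  have hsub1 : ((1 : Matrix m m L).submatrix e id) * (normU x).map f =
      ((normU x).submatrix e id).map f := by
    ext i j
    simp [Matrix.mul_apply, Matrix.one_apply]
  have hsub2 : (normV x).map f * ((1 : Matrix l l L).submatrix id e₀) =
      ((normV x).submatrix id e₀).map f := by
    ext i j
    simp [Matrix.mul_apply, Matrix.one_apply]
  have main := derivation_eq_zero D A₁ A₂ hA e ((normU x).map f) ((normV x).map f)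
    ((((normU x).submatrix e id).map f)⁻¹ * (1 : Matrix m m L).submatrix e id)
    ((1 : Matrix l l L).submatrix id e₀ * (((normV x).submatrix id e₀).map f)⁻¹)
    (by rw [Matrix.mul_assoc, hsub1, Matrix.nonsing_inv_mul _ hF])
    (by rw [← Matrix.mul_assoc, hsub2, Matrix.mul_nonsing_inv _ hG])
    (by
      intro i j h
      rw [map_normU, normU_apply_frozen he _ h])
    (by
      ext i j
      have := hD (0, i, j)
      rw [show algebraMap B L _ = _ from map_outp A₁ A₂ f _ _ _] at this
      exact this)
    (by
      ext i j
      have := hD (1, i, j)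
      rw [show algebraMap B L _ = _ from map_outp A₁ A₂ f _ _ _] at this
      exact this)
  rcases i with p | p
  · exact congrFun (congrFun main.2 p.1) p.2
  · have := congrFun (congrFun main.1 p.1.1) p.1.2
    rw [Matrix.map_apply, Matrix.map_apply, normU_inr] at this
    exact this

/-! ### The vanishing ideal as a kernel -/

/-- The block-diagonal part of the square submatrix of `W` on the rows selected by `e`. -/
def blockPart {n : ℕ} {m : Type} {R : Type*} [Zero R] (A₁ A₂ : Fin n → Bool) (e : Fin n → m)
    (W : Matrix m (Fin n) R) : Matrix (Fin n) (Fin n) R := fun i j =>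
  if (A₁ i, A₂ i) = (A₁ j, A₂ j) then W (e i) j else 0

/-- The pair `(W₂ G⁻¹, G W₁)`, with `G` the block-diagonal part of `W₂`, is normalized and has the
same masked products, as `G` commutes with the masks. -/
theorem exists_normalized {n : ℕ} {m l : Type} {K : Type*} [Field K]
    (A₁ A₂ : Fin n → Bool) (e : Fin n → m) (he : Function.Injective e)
    (W₂ : Matrix m (Fin n) K) (W₁ : Matrix (Fin n) l K)
    (hG : (blockPart A₁ A₂ e W₂).det ≠ 0) :
    ∃ x : Par l A₁ A₂ e → K, outp A₁ A₂ (normU x) (normV x) = outp A₁ A₂ W₂ W₁ := by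
  set G := blockPart A₁ A₂ e W₂ with hGdef
  have hu : IsUnit G.det := isUnit_iff_ne_zero.2 hG
  have comm : ∀ s : Fin n → Bool, (∀ i j, (A₁ i, A₂ i) = (A₁ j, A₂ j) → s i = s j) →
      maskMat K s * G = G * maskMat K s := by
    intro s hs
    ext i j
    rw [maskMat, Matrix.diagonal_mul, Matrix.mul_diagonal, hGdef, blockPart]
    by_cases h : (A₁ i, A₂ i) = (A₁ j, A₂ j)
    · rw [if_pos h, hs i j h, mul_comm]
    · rw [if_neg h, mul_zero, zero_mul]
  have comm' : ∀ s : Fin n → Bool, (∀ i j, (A₁ i, A₂ i) = (A₁ j, A₂ j) → s i = s j) →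
      G⁻¹ * maskMat K s = maskMat K s * G⁻¹ := by
    intro s hs
    calc G⁻¹ * maskMat K s = G⁻¹ * (maskMat K s * G) * G⁻¹ := by
          rw [Matrix.mul_assoc, Matrix.mul_assoc, Matrix.mul_nonsing_inv _ hu, Matrix.mul_one]
      _ = maskMat K s * G⁻¹ := by
          rw [comm s hs, ← Matrix.mul_assoc, Matrix.nonsing_inv_mul _ hu, Matrix.one_mul]
  have hs1 : ∀ i j, (A₁ i, A₂ i) = (A₁ j, A₂ j) → A₁ i = A₁ j := fun i j h => congrArg Prod.fst h
  have hs2 : ∀ i j, (A₁ i, A₂ i) = (A₁ j, A₂ j) → A₂ i = A₂ j := fun i j h => congrArg Prod.snd h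
  -- Commuting with both masks forces `G⁻¹` to be block diagonal as well.
  have inv_zero : ∀ i j, (A₁ i, A₂ i) ≠ (A₁ j, A₂ j) → G⁻¹ i j = 0 := by
    intro i j hij
    have h1 := congrFun (congrFun (comm' A₁ hs1) i) j
    have h2 := congrFun (congrFun (comm' A₂ hs2) i) j
    rw [maskMat, Matrix.diagonal_mul, Matrix.mul_diagonal] at h1 h2
    by_cases h : A₁ i = A₁ j
    · have h' : A₂ i ≠ A₂ j := fun h' => hij (by rw [h, h'])
      cases ha : A₂ i <;> cases hb : A₂ j <;> simp_all
    · cases ha : A₁ i <;> cases hb : A₁ j <;> simp_all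
  have hnorm : ∀ k j, (A₁ k, A₂ k) = (A₁ j, A₂ j) →
      (W₂ * G⁻¹) (e k) j = if k = j then 1 else 0 := by
    intro k j hkj
    have h1 : (W₂ * G⁻¹) (e k) j = (G * G⁻¹) k j := by
      rw [Matrix.mul_apply, Matrix.mul_apply]
      refine Finset.sum_congr rfl fun i _ => ?_
      by_cases hi : (A₁ i, A₂ i) = (A₁ j, A₂ j)
      · rw [hGdef, blockPart, if_pos (hkj.trans hi.symm)]
      · rw [inv_zero i j hi, mul_zero, mul_zero]
    rw [h1, Matrix.mul_nonsing_inv _ hu, Matrix.one_apply]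
  let x : Par l A₁ A₂ e → K :=
    Sum.elim (fun p => (G * W₁) p.1 p.2) fun p => (W₂ * G⁻¹) p.1.1 p.1.2
  have hxU : normU x = W₂ * G⁻¹ := by
    ext i j
    rw [normU]
    split_ifs with h h'
    · obtain ⟨k, hk, hk'⟩ := h
      obtain rfl : i = e k := hk
      rw [hnorm k j hk', if_pos (he h')]
    · obtain ⟨k, hk, hk'⟩ := h
      obtain rfl : i = e k := hk
      rw [hnorm k j hk', if_neg fun hkj => h' (congrArg e hkj)]
    · rfl
  have hxV : normV x = G * W₁ := rfl
  have key : ∀ s : Fin n → Bool, (∀ i j, (A₁ i, A₂ i) = (A₁ j, A₂ j) → s i = s j) →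
      W₂ * G⁻¹ * maskMat K s * (G * W₁) = W₂ * maskMat K s * W₁ := by
    intro s hs
    calc W₂ * G⁻¹ * maskMat K s * (G * W₁) = W₂ * (G⁻¹ * maskMat K s * G) * W₁ := by
          simp only [Matrix.mul_assoc]
      _ = _ := by
          rw [comm' s hs, Matrix.mul_assoc (maskMat K s), Matrix.nonsing_inv_mul _ hu,
            Matrix.mul_one]
  refine ⟨x, ?_⟩
  ext q
  rw [outp, outp, hxU, hxV, key A₁ hs1, key A₂ hs2]

theorem continuous_outp {n : ℕ} {m l : Type} (A₁ A₂ : Fin n → Bool) (W₂ E : Matrix m (Fin n) ℝ)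
    (W₁ : Matrix (Fin n) l ℝ) (q : Fin 2 × m × l) :
    Continuous fun t : ℝ => outp A₁ A₂ (W₂ + t • E) W₁ q := by
  obtain ⟨a, i, j⟩ := q
  have key : ∀ s : Fin n → Bool,
      Continuous fun t : ℝ => ((W₂ + t • E) * maskMat ℝ s * W₁) i j := by
    intro s
    have h : Continuous fun t : ℝ => W₂ + t • E := by fun_prop
    exact ((h.matrix_mul continuous_const).matrix_mul continuous_const).matrix_elem i j
  fin_cases a
  · exact key A₁
  · exact key A₂

open MvPolynomial in
theorem eval_aeval_outp {n : ℕ} {m l : Type} {A₁ A₂ : Fin n → Bool} {e : Fin n → m}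
    (x : Par l A₁ A₂ e → ℝ) (f : MvPolynomial (Fin 2 × m × l) ℂ) :
    eval (fun i => (x i : ℂ)) (aeval (R := ℂ)
      (outp A₁ A₂ (normU (X (R := ℂ) (σ := Par l A₁ A₂ e))) (normV X)) f) =
    eval (fun q => ((outp A₁ A₂ (normU x) (normV x) q : ℝ) : ℂ)) f := by
  have h1 : ∀ q, eval (fun i => (x i : ℂ)) (outp A₁ A₂
      (normU (X (R := ℂ) (σ := Par l A₁ A₂ e))) (normV X) q) =
      ((outp A₁ A₂ (normU x) (normV x) q : ℝ) : ℂ) := by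
    intro q
    rw [map_outp, map_normU, ← Complex.ofRealHom_eq_coe, map_outp, map_normU]
    simp only [eval_X]
    congr 1
    ext i j
    exact eval_X _
  simp only [← h1]
  induction f using MvPolynomial.induction_on with
  | C a => simp
  | add p q hp hq => simp only [map_add, hp, hq]
  | mul_X p i hp => simp only [map_mul, hp, aeval_X, eval_X]

open MvPolynomial in
/-- A polynomial is killed by the generic normalized parametrization iff it vanishes at the masked
products of all real weights. -/
theorem mem_ker_iff {n : ℕ} {m l : Type} [DecidableEq m] [Fintype m] [Fintype l]
    (A₁ A₂ : Fin n → Bool) (e : Fin n → m) (he : Function.Injective e)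
    (f : MvPolynomial (Fin 2 × m × l) ℂ) :
    aeval (R := ℂ) (outp A₁ A₂ (normU (X (R := ℂ) (σ := Par l A₁ A₂ e))) (normV X)) f = 0 ↔
      ∀ (W₂ : Matrix m (Fin n) ℝ) (W₁ : Matrix (Fin n) l ℝ),
        eval (fun q => ((outp A₁ A₂ W₂ W₁ q : ℝ) : ℂ)) f = 0 := by
  constructor
  · intro hf W₂ W₁
    -- Along `W₂ + t • E` the block-diagonal part is `G + t`, invertible for all but finitely many
    -- `t`, so `f` vanishes on a dense subset of this line and hence at `t = 0`.
    let E : Matrix m (Fin n) ℝ := fun i j => if i = e j then 1 else 0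
    let G := blockPart A₁ A₂ e W₂
    have hGt : ∀ t : ℝ, blockPart A₁ A₂ e (W₂ + t • E) = Matrix.scalar (Fin n) t - -G := by
      intro t
      ext i j
      have hE : (W₂ + t • E) (e i) j = W₂ (e i) j + t * if i = j then 1 else 0 := by
        change W₂ (e i) j + t * (if e i = e j then 1 else 0) = _
        simp only [he.eq_iff]
      simp only [blockPart, G, Matrix.sub_apply, Matrix.neg_apply, Matrix.scalar_apply,
        Matrix.diagonal_apply, hE]
      split_ifs <;> simp_all [add_comm]
    have hdense : Dense {t : ℝ | t ∈ (-G).charpoly.roots}ᶜ :=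
      ((-G).charpoly.roots.finite_toSet).countable.dense_compl ℝ
    have hcont : Continuous fun t : ℝ =>
        eval (fun q => ((outp A₁ A₂ (W₂ + t • E) W₁ q : ℝ) : ℂ)) f :=
      (MvPolynomial.continuous_eval f).comp (continuous_pi fun q =>
        Complex.continuous_ofReal.comp (continuous_outp A₁ A₂ W₂ E W₁ q))
    have := congrFun (Continuous.ext_on hdense hcont continuous_const
      (g := fun _ => (0 : ℂ)) fun t ht => by
        have hdet : (blockPart A₁ A₂ e (W₂ + t • E)).det ≠ 0 := by
          rw [hGt, ← Matrix.eval_charpoly]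
          intro h0
          exact ht ((Polynomial.mem_roots (Matrix.charpoly_monic _).ne_zero).2 h0)
        obtain ⟨x, hx⟩ := exists_normalized A₁ A₂ e he (W₂ + t • E) W₁ hdet
        simp only
        rw [← hx, ← eval_aeval_outp, hf, map_zero]) 0
    simpa using this
  · intro hf
    refine MvPolynomial.funext_set (fun _ => Set.range ((↑) : ℝ → ℂ))
      (fun _ => Set.infinite_range_of_injective Complex.ofReal_injective) fun y hy => ?_
    rw [map_zero]
    choose x hx using fun i => hy i (Set.mem_univ i)
    obtain rfl : (fun i => (x i : ℂ)) = y := funext hx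
    rw [eval_aeval_outp]
    exact hf _ _

/-! ### Counting parameters -/

/-- By inclusion-exclusion, every neuron is active in one of the two patterns. -/
theorem pattern_cover {n : ℕ} {A₁ A₂ : Fin n → Bool}
    (h : rOf A₁ + rOf A₂ - sOf A₁ A₂ = n) (j : Fin n) : A₁ j = true ∨ A₂ j = true := by
  have h1 := Finset.card_union_add_card_inter (Finset.univ.filter fun j => A₁ j = true)
    (Finset.univ.filter fun j => A₂ j = true)
  rw [← Finset.filter_or, ← Finset.filter_and] at h1
  have h2 : (Finset.univ.filter fun j => A₁ j = true ∨ A₂ j = true).card =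
      (Finset.univ : Finset (Fin n)).card := by
    rw [Finset.card_univ, Fintype.card_fin]
    simp only [rOf, sOf] at h
    omega
  have h3 := (Finset.card_filter_eq_iff.1 h2) j (Finset.mem_univ j)
  exact h3

theorem card_Par {n n₀ n₂ : ℕ} (A₁ A₂ : Fin n → Bool)
    (hfull : rOf A₁ + rOf A₂ - sOf A₁ A₂ = n)
    (h₂ : n ≤ n₂) (e : Fin n → Fin n₂) (he : Function.Injective e)
    [Fintype {p : Fin n₂ × Fin n // ¬ Frozen A₁ A₂ e p}] :
    Fintype.card (Par (Fin n₀) A₁ A₂ e) =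
      dExp (n₀ + n₂) (rOf A₁ - sOf A₁ A₂) + dExp (n₀ + n₂) (rOf A₂ - sOf A₁ A₂) +
        dExp (n₀ + n₂) (sOf A₁ A₂) := by
  classical
  have hA := pattern_cover hfull
  let sa := Finset.univ.filter fun j => A₁ j = true ∧ A₂ j = false
  let sb := Finset.univ.filter fun j => A₁ j = false ∧ A₂ j = true
  let sc := Finset.univ.filter fun j => A₁ j = true ∧ A₂ j = true
  have h1 : rOf A₁ = sa.card + sc.card := by
    rw [rOf, ← Finset.card_filter_add_card_filter_not (s := Finset.univ.filter fun j => A₁ j = true)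
      (fun j => A₂ j = false), Finset.filter_filter, Finset.filter_filter]
    simp [sa, sc]
  have h2 : rOf A₂ = sb.card + sc.card := by
    rw [rOf, ← Finset.card_filter_add_card_filter_not (s := Finset.univ.filter fun j => A₂ j = true)
      (fun j => A₁ j = false), Finset.filter_filter, Finset.filter_filter]
    simp [sb, sc, and_comm]
  have h3 : sOf A₁ A₂ = sc.card := rfl
  have hF : (Finset.univ.filter fun p => Frozen A₁ A₂ e p) =
      ((sa ×ˢ sa) ∪ ((sb ×ˢ sb) ∪ (sc ×ˢ sc))).image fun p => (e p.1, p.2) := by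
    ext ⟨i, j⟩
    simp only [Finset.mem_filter, Finset.mem_univ, true_and, Finset.mem_image, Finset.mem_union,
      Finset.mem_product, Frozen, Prod.exists, Prod.mk.injEq, sa, sb, sc]
    constructor
    · rintro ⟨k, rfl, hk⟩
      refine ⟨k, j, ?_, rfl, rfl⟩
      have := hA j
      rw [hk.1, hk.2]
      revert this
      cases A₁ j <;> cases A₂ j <;> simp
    · rintro ⟨k, l, h, rfl, rfl⟩
      refine ⟨k, rfl, ?_⟩
      rcases h with h | h | h <;> simp [h]
  have hcard : Fintype.card {p : Fin n₂ × Fin n // Frozen A₁ A₂ e p} =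
      sa.card * sa.card + (sb.card * sb.card + sc.card * sc.card) := by
    rw [Fintype.card_subtype, hF, Finset.card_image_of_injective, Finset.card_union_of_disjoint,
      Finset.card_union_of_disjoint, Finset.card_product, Finset.card_product, Finset.card_product]
    · rw [Finset.disjoint_left]
      rintro ⟨i, j⟩ h h'
      simp_all [sb, sc]
    · rw [Finset.disjoint_left]
      rintro ⟨i, j⟩ h h'
      simp_all [sa, sb, sc]
    · rintro ⟨i, j⟩ ⟨i', j'⟩ h
      simpa [he.eq_iff] using h
  have hP : Fintype.card (Par (Fin n₀) A₁ A₂ e) =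
      n * n₀ + (n₂ * n - (sa.card * sa.card + (sb.card * sb.card + sc.card * sc.card))) := by
    rw [← hcard, Fintype.card_sum, Fintype.card_subtype_compl]
    simp
  rw [hP, h1, h2, h3]
  rw [h1, h2, h3] at hfull
  generalize sa.card = a at *
  generalize sb.card = b at *
  generalize sc.card = c at *
  obtain rfl : n = a + b + c := by omega
  obtain ⟨d, rfl⟩ := Nat.exists_eq_add_of_le h₂
  have e1 : (a + b + c + d) * (a + b + c) - (a * a + (b * b + c * c)) =
      2 * (a * b + a * c + b * c) + d * (a + b + c) :=
    Nat.sub_eq_of_eq_add (by ring)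
  have e2 : ∀ x y, dExp (n₀ + (x + y)) x = x * (n₀ + y) := fun x y =>
    Nat.sub_eq_of_eq_add (by ring)
  rw [e1, Nat.add_sub_cancel, Nat.add_sub_cancel, show a + b + c + d = a + (b + c + d) by ring, e2,
    show a + (b + c + d) = b + (a + c + d) by ring, e2,
    show b + (a + c + d) = c + (a + b + d) by ring, e2]
  ring

/-- If `r_1 + r_2 − s = n_1`, `n_0 ≥ n_1` and `n_1 ≤ n_2`, then the
two-block shallow ReLU pattern variety has the expected dimension: the Krull dimension
of the quotient of `ℂ[z^{(1)}, z^{(2)}]` by the vanishing ideal of the image of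
`θ ↦ (W^{(2)}·diag(A_1)·W^{(1)}, W^{(2)}·diag(A_2)·W^{(1)})` equals
`d_a + d_b + d_c`. -/
theorem statement15 (n₀ n₁ n₂ : ℕ) (A₁ A₂ : Fin n₁ → Bool)
    (hfull : rOf A₁ + rOf A₂ - sOf A₁ A₂ = n₁)
    (h₀ : n₁ ≤ n₀) (h₂ : n₁ ≤ n₂) :
    ringKrullDim (MvPolynomial (Fin 2 × Fin n₂ × Fin n₀) ℂ ⧸
        vanishingIdeal {y : Fin 2 × Fin n₂ × Fin n₀ → ℝ |
          ∃ (W₁ : Matrix (Fin n₁) (Fin n₀) ℝ) (W₂ : Matrix (Fin n₂) (Fin n₁) ℝ),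
            y = fun q =>
              ![W₂ * diagPat n₁ A₁ * W₁, W₂ * diagPat n₁ A₂ * W₁] q.1 q.2.1 q.2.2}) =
      (dExp (n₀ + n₂) (rOf A₁ - sOf A₁ A₂) + dExp (n₀ + n₂) (rOf A₂ - sOf A₁ A₂) +
        dExp (n₀ + n₂) (sOf A₁ A₂) : ℕ) := by
  classical
  let e : Fin n₁ → Fin n₂ := Fin.castLE h₂
  have he : Function.Injective e := Fin.castLE_injective h₂
  let p := outp (m := Fin n₂) (l := Fin n₀) A₁ A₂
    (normU (MvPolynomial.X (R := ℂ) (σ := Par (Fin n₀) A₁ A₂ e))) (normV MvPolynomial.X)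
  have hker : vanishingIdeal {y : Fin 2 × Fin n₂ × Fin n₀ → ℝ |
      ∃ (W₁ : Matrix (Fin n₁) (Fin n₀) ℝ) (W₂ : Matrix (Fin n₂) (Fin n₁) ℝ),
        y = fun q => ![W₂ * diagPat n₁ A₁ * W₁, W₂ * diagPat n₁ A₂ * W₁] q.1 q.2.1 q.2.2} =
      RingHom.ker (MvPolynomial.aeval (R := ℂ) p) := by
    ext f
    rw [RingHom.mem_ker, mem_ker_iff A₁ A₂ e he f]
    constructor
    · intro hf W₂ W₁
      exact hf _ ⟨W₁, W₂, rfl⟩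
    · rintro hf y ⟨W₁, W₂, rfl⟩
      exact hf W₂ W₁
  rw [hker, ringKrullDim_quotient_ker_of_derivation
    (L := FractionRing (MvPolynomial (Par (Fin n₀) A₁ A₂ e) ℂ)) p, card_Par A₁ A₂ hfull h₂ e he]
  exact genericPar_derivation_eq_zero A₁ A₂ (pattern_cover hfull) e he (Fin.castLE h₀)
    (Fin.castLE_injective h₀)
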